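/- arXiv:2402.03588 — 6 statements merged into one kernel-verified Lean document; each statement's English description precedes it below -/
import Mathlib

section
/- Let X be a set, 𝒞 a finite set of classes with at least two elements, ρ > 0, and let F be a nonempty class of scoring functions f : X × 𝒞 → ℝ. Fix f₀ ∈ F and assume that for every f ∈ F the function f − f₀ also lies in F. Let S and T be probability distributions on X × 𝒞 (with all quantities below measurable and integrable). Define d^{(ρ)}_{f,f₀,F}(S,T) = sup_{f'∈F} ( E_{x∼T_X}[Φ^ρ(ρ_{f'+f₀}(x, h_f(x)))] − E_{x∼S_X}[Φ^ρ(ρ_{f'+f₀}(x, h_f(x)))] ), where S_X, T_X are the marginals on X, and λ = min_{f*∈F} ( err_S^{(ρ)}(f*) + err_T^{(ρ)}(f*) ) (assumed attained or taken as infimum). Then for every f ∈ F: err_T(f) ≤ err_S^{(ρ)}(f) + d^{(ρ)}_{f,f₀,F}(S,T) + λ. -/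
open MeasureTheory Real

/-- Ramp function `Φ^ρ`. -/
noncomputable def ramp (ρ t : ℝ) : ℝ := if t < 0 then 1 else if t ≤ ρ then 1 - t / ρ else 0

/-- Margin `ρ_f(x,c) = f(x,c) − max_{c'≠c} f(x,c')`. -/
noncomputable def margin {X C : Type*} [Fintype C] [DecidableEq C] [Nontrivial C]
    (f : X × C → ℝ) (x : X) (c : C) : ℝ :=
  f (x, c) - (Finset.univ.erase c).sup'
    (by obtain ⟨b, hb⟩ := exists_ne c
        exact ⟨b, Finset.mem_erase.2 ⟨hb, Finset.mem_univ b⟩⟩)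
    (fun c' => f (x, c'))

lemma ramp_nonneg' {ρ : ℝ} (hρ : 0 < ρ) (t : ℝ) : 0 ≤ ramp ρ t := by
  unfold ramp
  split_ifs with h1 h2
  · norm_num
  · have := (div_le_one hρ).2 h2
    linarith
  · exact le_rfl

lemma ramp_le_one' {ρ : ℝ} (hρ : 0 < ρ) (t : ℝ) : ramp ρ t ≤ 1 := by
  unfold ramp
  split_ifs with h1 h2
  · norm_num
  · have := div_nonneg (not_lt.1 h1) hρ.le
    linarith
  · norm_num

lemma ramp_of_nonpos {ρ : ℝ} (hρ : 0 < ρ) {t : ℝ} (ht : t ≤ 0) : ramp ρ t = 1 := by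
  rcases ht.lt_or_eq with h | h
  · simp [ramp, h]
  · simp [ramp, h, hρ.le]

lemma margin_le {X C : Type*} [Fintype C] [DecidableEq C] [Nontrivial C]
    (f : X × C → ℝ) (x : X) {c c' : C} (h : c' ≠ c) : margin f x c ≤ f (x, c) - f (x, c') := by
  unfold margin
  have := Finset.le_sup' (s := Finset.univ.erase c) (fun c' => f (x, c'))
    (Finset.mem_erase.2 ⟨h, Finset.mem_univ c'⟩)
  linarith

/-- the margin-disparity generalization bound
`err_T(f) ≤ err_S^{(ρ)}(f) + d^{(ρ)}_{f,f₀,F}(S,T) + λ` for every `f ∈ F`,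
where `am` is the fixed argmax tie-breaking rule inducing the classifier `h_f = am f`. -/
theorem stmt0 {X C : Type*} [MeasurableSpace X] [MeasurableSpace C]
    [Fintype C] [DecidableEq C] [Nontrivial C]
    (ρ : ℝ) (hρ : 0 < ρ)
    (F : Set (X × C → ℝ)) (hF : F.Nonempty)
    (f₀ : X × C → ℝ) (hf₀ : f₀ ∈ F)
    (hclosed : ∀ f ∈ F, (f - f₀) ∈ F)
    -- the classifier `h_f = am f` given by an argmax with a fixed tie-breaking rule
    (am : (X × C → ℝ) → X → C)
    (ham : ∀ g : X × C → ℝ, ∀ x : X, ∀ c : C, g (x, c) ≤ g (x, am g x))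
    (S T : Measure (X × C)) [IsProbabilityMeasure S] [IsProbabilityMeasure T]
    -- all quantities below are measurable and integrable
    (hdispS : ∀ f ∈ F, ∀ f' ∈ F,
      Integrable (fun x => ramp ρ (margin (f' + f₀) x (am f x))) (S.map Prod.fst))
    (hdispT : ∀ f ∈ F, ∀ f' ∈ F,
      Integrable (fun x => ramp ρ (margin (f' + f₀) x (am f x))) (T.map Prod.fst))
    (herrS : ∀ f ∈ F, Integrable (fun p => ramp ρ (margin f p.1 p.2)) S)
    (herrT : ∀ f ∈ F, Integrable (fun p => ramp ρ (margin f p.1 p.2)) T) :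
    ∀ f ∈ F,
      (T {p : X × C | am f p.1 ≠ p.2}).toReal ≤
        (∫ p, ramp ρ (margin f p.1 p.2) ∂S)
        + sSup {v : ℝ | ∃ f' ∈ F, v =
            (∫ x, ramp ρ (margin (f' + f₀) x (am f x)) ∂(T.map Prod.fst))
            - ∫ x, ramp ρ (margin (f' + f₀) x (am f x)) ∂(S.map Prod.fst)}
        + sInf {v : ℝ | ∃ g ∈ F, v =
            (∫ p, ramp ρ (margin g p.1 p.2) ∂S) + ∫ p, ramp ρ (margin g p.1 p.2) ∂T} := by
  intro f hf
  rw [← sub_le_iff_le_add']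
  refine le_csInf ?_ ?_
  · obtain ⟨g, hg⟩ := hF
    exact ⟨_, g, hg, rfl⟩
  rintro v ⟨g, hg, rfl⟩
  have : IsProbabilityMeasure (T.map Prod.fst) :=
    Measure.isProbabilityMeasure_map measurable_fst.aemeasurable
  have hsup := le_csSup (s := {v : ℝ | ∃ f' ∈ F, v =
            (∫ x, ramp ρ (margin (f' + f₀) x (am f x)) ∂(T.map Prod.fst))
            - ∫ x, ramp ρ (margin (f' + f₀) x (am f x)) ∂(S.map Prod.fst)}) (by
      refine ⟨1, ?_⟩
      rintro v ⟨f', hf', rfl⟩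
      have h1 : (∫ x, ramp ρ (margin (f' + f₀) x (am f x)) ∂(T.map Prod.fst)) ≤ 1 := by
        have := integral_mono (hdispT f hf f' hf') (integrable_const (1 : ℝ))
          (fun x => ramp_le_one' hρ _)
        simpa using this
      have h2 : 0 ≤ ∫ x, ramp ρ (margin (f' + f₀) x (am f x)) ∂(S.map Prod.fst) :=
        integral_nonneg (fun x => ramp_nonneg' hρ _)
      linarith) ⟨g - f₀, hclosed g hg, rfl⟩
  have hS := hdispS f hf _ (hclosed g hg)
  have hT := hdispT f hf _ (hclosed g hg)
  rw [sub_add_cancel] at hsup hS hT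
  rw [integral_map measurable_fst.aemeasurable hS.aestronglyMeasurable,
    integral_map measurable_fst.aemeasurable hT.aestronglyMeasurable] at hsup
  have hS' := hS.comp_measurable measurable_fst
  have hT' := hT.comp_measurable measurable_fst
  simp only [Function.comp_def] at hS' hT'
  have hA : (∫ p, ramp ρ (margin g p.1 (am f p.1)) ∂S) ≤
      (∫ p, ramp ρ (margin f p.1 p.2) ∂S) + ∫ p, ramp ρ (margin g p.1 p.2) ∂S := by
    rw [← integral_add (herrS f hf) (herrS g hg)]
    refine integral_mono hS' ((herrS f hf).add (herrS g hg)) ?_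
    rintro ⟨x, y⟩
    simp only [Pi.add_apply]
    by_cases h : am f x = y
    · rw [h]
      linarith [ramp_nonneg' hρ (margin f x y)]
    · rw [ramp_of_nonpos hρ (t := margin f x y)
        ((margin_le f x h).trans (by linarith [ham f x y]))]
      linarith [ramp_le_one' hρ (margin g x (am f x)), ramp_nonneg' hρ (margin g x y)]
  have hB : (T {p : X × C | am f p.1 ≠ p.2}).toReal ≤
      (∫ p, ramp ρ (margin g p.1 (am f p.1)) ∂T) + ∫ p, ramp ρ (margin g p.1 p.2) ∂T := by
    rw [← integral_add hT' (herrT g hg)]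
    have hm := mul_meas_ge_le_integral_of_nonneg (μ := T)
      (f := fun p : X × C => ramp ρ (margin g p.1 (am f p.1)) + ramp ρ (margin g p.1 p.2))
      (Filter.Eventually.of_forall fun p => add_nonneg (ramp_nonneg' hρ _) (ramp_nonneg' hρ _))
      (hT'.add (herrT g hg)) 1
    rw [one_mul] at hm
    refine le_trans ?_ hm
    refine measureReal_mono ?_
    rintro ⟨x, y⟩ h
    simp only [Set.mem_setOf_eq] at h ⊢
    have h1 := margin_le g x h
    have h2 := margin_le g x (Ne.symm h)
    rcases le_total (g (x, y)) (g (x, am f x)) with h3 | h3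
    · rw [ramp_of_nonpos hρ (t := margin g x y) (by linarith)]
      linarith [ramp_nonneg' hρ (margin g x (am f x))]
    · rw [ramp_of_nonpos hρ (t := margin g x (am f x)) (by linarith)]
      linarith [ramp_nonneg' hρ (margin g x y)]
  linarith
end

section
/- Let X be a set, 𝒞 a finite set of classes with at least two elements, and ρ > 0. For any two scoring functions f, f' : X × 𝒞 → ℝ, any x ∈ X and any y ∈ 𝒞, the pointwise triangle inequality holds: Φ^ρ(ρ_{f'}(x, h_f(x))) ≤ Φ^ρ(ρ_{f'}(x, y)) + Φ^ρ(ρ_f(x, y)). -/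
open MeasureTheory Real

/-- pointwise triangle inequality
`Φ^ρ(ρ_{f'}(x, h_f(x))) ≤ Φ^ρ(ρ_{f'}(x, y)) + Φ^ρ(ρ_f(x, y))`,
where `am` is the fixed argmax tie-breaking rule inducing the classifier `h_f = am f`. -/
theorem stmt1 {X C : Type*} [Fintype C] [DecidableEq C] [Nontrivial C]
    (ρ : ℝ) (hρ : 0 < ρ)
    (am : (X × C → ℝ) → X → C)
    (ham : ∀ g : X × C → ℝ, ∀ x : X, ∀ c : C, g (x, c) ≤ g (x, am g x))
    (f f' : X × C → ℝ) (x : X) (y : C) :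
    ramp ρ (margin f' x (am f x)) ≤ ramp ρ (margin f' x y) + ramp ρ (margin f x y) := by
  have h0 : ∀ t, 0 ≤ ramp ρ t := by
    intro t
    unfold ramp
    split_ifs with h1 h2
    · exact zero_le_one
    · have := (div_le_one hρ).2 h2
      linarith
    · exact le_rfl
  have h1 : ∀ t, ramp ρ t ≤ 1 := by
    intro t
    unfold ramp
    split_ifs with h1 h2
    · exact le_rfl
    · have := div_nonneg (not_lt.1 h1) hρ.le
      linarith
    · exact zero_le_one
  by_cases h : am f x = y
  · rw [h]
    linarith [h0 (margin f x y)]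
  · have hm : margin f x y ≤ 0 := by
      unfold margin
      have h2 := Finset.le_sup' (fun c' => f (x, c'))
        (Finset.mem_erase.2 ⟨h, Finset.mem_univ (am f x)⟩)
      have h3 := ham f x y
      linarith
    have h4 : ramp ρ (margin f x y) = 1 := by
      rcases hm.lt_or_eq with h5 | h5
      · simp [ramp, h5]
      · simp [ramp, h5, hρ.le]
    linarith [h0 (margin f' x y), h1 (margin f' x (am f x))]
end

section
/- Let X be a set, 𝒞 a finite set of classes with at least two elements, ρ > 0, and let D be a probability distribution on X × 𝒞 with X-marginal D_X (all integrands measurable). Then for any two scoring functions f, f' : X × 𝒞 → ℝ, the margin disparity is bounded by the sum of margin errors: disp_{D_X}^{(ρ)}(f', f) ≤ err_D^{(ρ)}(f') + err_D^{(ρ)}(f). -/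
open MeasureTheory Real

/-- `disp_{D_X}^{(ρ)}(f', f) ≤ err_D^{(ρ)}(f') + err_D^{(ρ)}(f)`,
where `am` is the fixed argmax tie-breaking rule inducing the classifier `h_f = am f`. -/
theorem stmt2 {X C : Type*} [MeasurableSpace X] [MeasurableSpace C]
    [Fintype C] [DecidableEq C] [Nontrivial C]
    (ρ : ℝ) (hρ : 0 < ρ)
    (am : (X × C → ℝ) → X → C)
    (ham : ∀ g : X × C → ℝ, ∀ x : X, ∀ c : C, g (x, c) ≤ g (x, am g x))
    (D : Measure (X × C)) [IsProbabilityMeasure D]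
    (f f' : X × C → ℝ)
    -- all integrands measurable (hence integrable, being `[0,1]`-valued)
    (hdisp : Integrable (fun x => ramp ρ (margin f' x (am f x))) (D.map Prod.fst))
    (herr' : Integrable (fun p => ramp ρ (margin f' p.1 p.2)) D)
    (herr : Integrable (fun p => ramp ρ (margin f p.1 p.2)) D) :
    (∫ x, ramp ρ (margin f' x (am f x)) ∂(D.map Prod.fst)) ≤
      (∫ p, ramp ρ (margin f' p.1 p.2) ∂D) + ∫ p, ramp ρ (margin f p.1 p.2) ∂D := by
  have h0 : ∀ t, 0 ≤ ramp ρ t := by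
    intro t
    unfold ramp
    split_ifs with h1 h2
    · exact zero_le_one
    · have := (div_le_one hρ).2 h2
      linarith
    · exact le_rfl
  have h1 : ∀ t, ramp ρ t ≤ 1 := by
    intro t
    unfold ramp
    split_ifs with h1 h2
    · exact le_rfl
    · have := div_nonneg (not_lt.1 h1) hρ.le
      linarith
    · exact zero_le_one
  have h2 : ∀ t, t ≤ 0 → ramp ρ t = 1 := by
    intro t ht
    rcases ht.lt_or_eq with h | h
    · simp [ramp, h]
    · simp [ramp, h, hρ.le]
  rw [integral_map measurable_fst.aemeasurable hdisp.aestronglyMeasurable,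
    ← integral_add herr' herr]
  refine integral_mono (hdisp.comp_measurable measurable_fst) (herr'.add herr) ?_
  rintro ⟨x, y⟩
  show ramp ρ (margin f' x (am f x)) ≤ ramp ρ (margin f' x y) + ramp ρ (margin f x y)
  by_cases hy : am f x = y
  · rw [hy]
    linarith [h0 (margin f x y)]
  · have hm : margin f x y ≤ 0 := by
      unfold margin
      have h3 := Finset.le_sup' (fun c' => f (x, c'))
        (Finset.mem_erase.2 ⟨hy, Finset.mem_univ (am f x)⟩)
      have h4 := ham f x y
      linarith
    rw [h2 _ hm]
    linarith [h0 (margin f' x y), h1 (margin f' x (am f x))]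
end

section
/- (Talagrand's contraction lemma) Let X be a set, x₁, …, x_n points of X, G a family of functions X → ℝ, and for each i ∈ {1,…,n} let Ψ_i : ℝ → ℝ be l-Lipschitz for a common constant l ≥ 0. Then E_δ[ sup_{g∈G} (1/n) Σ_{i=1}^n δ_i (Ψ_i ∘ g)(x_i) ] ≤ l · E_δ[ sup_{g∈G} (1/n) Σ_{i=1}^n δ_i g(x_i) ], where δ₁,…,δ_n are i.i.d. uniform random variables taking values in {−1,+1} and both suprema are assumed finite. -/
open Real

theorem two_point {ι : Type*} [Nonempty ι] (d a b : ι → ℝ)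
    (h : ∀ s t, |b s - b t| ≤ |a s - a t|)
    (hd : ∃ M, ∀ s, |d s| ≤ M) (ha : ∃ M, ∀ s, |a s| ≤ M) :
    (⨆ s, (d s + b s)) + (⨆ s, (d s - b s)) ≤ (⨆ s, (d s + a s)) + (⨆ s, (d s - a s)) := by
  obtain ⟨M, hM⟩ := hd
  obtain ⟨N, hN⟩ := ha
  have h1 : BddAbove (Set.range fun s => d s + a s) := by
    refine ⟨M + N, ?_⟩
    rintro _ ⟨s, rfl⟩
    have := abs_le.1 (hM s)
    have := abs_le.1 (hN s)
    simp only
    linarith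
  have h2 : BddAbove (Set.range fun s => d s - a s) := by
    refine ⟨M + N, ?_⟩
    rintro _ ⟨s, rfl⟩
    have := abs_le.1 (hM s)
    have := abs_le.1 (hN s)
    simp only
    linarith
  have key : ∀ s t, (d s + b s) + (d t - b t) ≤ (⨆ s, (d s + a s)) + (⨆ s, (d s - a s)) := by
    intro s t
    have e1 := le_ciSup h1 s
    have e2 := le_ciSup h2 s
    have e3 := le_ciSup h1 t
    have e4 := le_ciSup h2 t
    have e5 := (le_abs_self _).trans (h s t)
    rcases abs_cases (a s - a t) with ⟨h6, _⟩ | ⟨h6, _⟩ <;> linarith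
  have h3 : ∀ t, (⨆ s, (d s + b s)) ≤
      (⨆ s, (d s + a s)) + (⨆ s, (d s - a s)) - (d t - b t) := by
    intro t
    apply ciSup_le
    intro s
    linarith [key s t]
  have h4 : (⨆ s, (d s - b s)) ≤
      (⨆ s, (d s + a s)) + (⨆ s, (d s - a s)) - (⨆ s, (d s + b s)) := by
    apply ciSup_le
    intro t
    linarith [h3 t]
  linarith

theorem contraction_aux {ι : Type*} [Nonempty ι] (n : ℕ) : ∀ (a b : Fin n → ι → ℝ) (c : ι → ℝ),
    (∀ i s t, |b i s - b i t| ≤ |a i s - a i t|) → (∀ i, ∃ M, ∀ s, |a i s| ≤ M) →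
    (∃ M, ∀ s, |c s| ≤ M) →
    ∑ σ : Fin n → Bool, (⨆ s, (c s + ∑ i, (if σ i then (1 : ℝ) else -1) * b i s)) ≤
    ∑ σ : Fin n → Bool, (⨆ s, (c s + ∑ i, (if σ i then (1 : ℝ) else -1) * a i s)) := by
  induction n with
  | zero => intro a b c _ _ _; simp
  | succ n ih =>
    intro a b c h ha hc
    have hb : ∃ M, ∀ s, |b 0 s| ≤ M := by
      obtain ⟨N, hN⟩ := ha 0
      obtain ⟨t⟩ := ‹Nonempty ι›
      refine ⟨|b 0 t| + 2 * N, fun s => ?_⟩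
      have e1 := h 0 s t
      have e2 := abs_sub (a 0 s) (a 0 t)
      have e3 := abs_sub_abs_le_abs_sub (b 0 s) (b 0 t)
      linarith [hN s, hN t]
    obtain ⟨C, hC⟩ := hc
    obtain ⟨B, hB⟩ := hb
    have split : ∀ f : (Fin (n+1) → Bool) → ℝ, ∑ σ, f σ =
        ∑ σ : Fin n → Bool, f (Fin.cons true σ) + ∑ σ : Fin n → Bool, f (Fin.cons false σ) := by
      intro f
      rw [← (Fin.consEquiv (fun _ => Bool)).sum_comp, Fintype.sum_prod_type]
      simp [Fin.consEquiv]
    have i1 := ih (fun i => a i.succ) (fun i => b i.succ) (fun s => c s + b 0 s)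
      (fun i => h i.succ) (fun i => ha i.succ)
      ⟨C + B, fun s => (abs_add_le _ _).trans (add_le_add (hC s) (hB s))⟩
    have i2 := ih (fun i => a i.succ) (fun i => b i.succ) (fun s => c s - b 0 s)
      (fun i => h i.succ) (fun i => ha i.succ)
      ⟨C + B, fun s => (abs_sub _ _).trans (add_le_add (hC s) (hB s))⟩
    rw [split, split]
    simp only [Fin.sum_univ_succ, Fin.cons_zero, Fin.cons_succ, if_true, Bool.false_eq_true,
      if_false, one_mul, neg_one_mul, ← add_assoc, ← sub_eq_add_neg]
    refine (add_le_add i1 i2).trans ?_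
    rw [← Finset.sum_add_distrib, ← Finset.sum_add_distrib]
    refine Finset.sum_le_sum fun σ _ => ?_
    choose A hA using ha
    have := two_point (fun s => c s + ∑ i : Fin n, (if σ i then (1 : ℝ) else -1) * a i.succ s)
      (a 0) (b 0) (h 0) ⟨C + ∑ i : Fin n, A i.succ, fun s => by
        refine (abs_add_le _ _).trans (add_le_add (hC s) ?_)
        refine (Finset.abs_sum_le_sum_abs _ _).trans (Finset.sum_le_sum fun i _ => ?_)
        refine le_trans (le_of_eq ?_) (hA i.succ s)
        split_ifs <;> simp⟩ ⟨A 0, hA 0⟩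
    simpa only [add_right_comm, add_sub_right_comm] using this

/-- Talagrand's contraction lemma:
if each `Ψ_i : ℝ → ℝ` is `l`-Lipschitz, then
`E_δ[sup_{g∈G} (1/n) Σ δ_i (Ψ_i ∘ g)(x_i)] ≤ l · E_δ[sup_{g∈G} (1/n) Σ δ_i g(x_i)]`,
where the expectation over the i.i.d. uniform signs `δ ∈ {−1,+1}ⁿ` is written as the
average over all `2ⁿ` sign vectors, and the suprema are assumed finite. -/
theorem stmt7 {X : Type*} (n : ℕ) (x : Fin n → X) (G : Set (X → ℝ)) (hG : G.Nonempty)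
    (l : ℝ) (hl : 0 ≤ l) (Ψ : Fin n → ℝ → ℝ)
    (hΨ : ∀ i : Fin n, ∀ a b : ℝ, |Ψ i a - Ψ i b| ≤ l * |a - b|)
    (hbdd₁ : ∀ σ : Fin n → Bool, BddAbove
      ((fun g => (n : ℝ)⁻¹ * ∑ i, (if σ i then (1 : ℝ) else -1) * Ψ i (g (x i))) '' G))
    (hbdd₂ : ∀ σ : Fin n → Bool, BddAbove
      ((fun g => (n : ℝ)⁻¹ * ∑ i, (if σ i then (1 : ℝ) else -1) * g (x i)) '' G)) :
    (∑ σ : Fin n → Bool,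
        sSup ((fun g => (n : ℝ)⁻¹ * ∑ i, (if σ i then (1 : ℝ) else -1) * Ψ i (g (x i))) '' G))
      / 2 ^ n
    ≤ l * ((∑ σ : Fin n → Bool,
        sSup ((fun g => (n : ℝ)⁻¹ * ∑ i, (if σ i then (1 : ℝ) else -1) * g (x i)) '' G))
      / 2 ^ n) := by
  have : Nonempty G := hG.to_subtype
  have hb : ∀ i : Fin n, ∃ M, ∀ g : G, |(n : ℝ)⁻¹ * (l * g.1 (x i))| ≤ M := by
    intro i
    choose M hM using hbdd₂
    refine ⟨l * ∑ σ, |M σ|, fun g => ?_⟩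
    have h0 : (0 : ℝ) ≤ (n : ℝ)⁻¹ := by positivity
    have e1 := hM (fun j => decide (0 ≤ g.1 (x j))) ⟨g.1, g.2, rfl⟩
    have e2 : ∀ j, (if decide (0 ≤ g.1 (x j)) = true then (1 : ℝ) else -1) * g.1 (x j)
        = |g.1 (x j)| := by
      intro j
      by_cases hj : 0 ≤ g.1 (x j)
      · simp [hj, abs_of_nonneg hj]
      · simp [hj, abs_of_neg (not_le.1 hj)]
    simp only [e2] at e1
    have e3 : |g.1 (x i)| ≤ ∑ j, |g.1 (x j)| :=
      Finset.single_le_sum (f := fun j => |g.1 (x j)|) (fun _ _ => abs_nonneg _)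
        (Finset.mem_univ i)
    have e4 := Finset.single_le_sum (f := fun σ => |M σ|) (fun _ _ => abs_nonneg _)
        (Finset.mem_univ (fun j => decide (0 ≤ g.1 (x j))))
    have e5 : (n : ℝ)⁻¹ * |g.1 (x i)| ≤ ∑ σ, |M σ| :=
      (mul_le_mul_of_nonneg_left e3 h0).trans (e1.trans ((le_abs_self _).trans e4))
    rw [abs_mul, abs_mul, abs_of_nonneg h0, abs_of_nonneg hl]
    calc _ = l * ((n : ℝ)⁻¹ * |g.1 (x i)|) := by ring
      _ ≤ _ := mul_le_mul_of_nonneg_left e5 hl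
  have main := contraction_aux (ι := G) n (fun i g => (n : ℝ)⁻¹ * (l * g.1 (x i)))
    (fun i g => (n : ℝ)⁻¹ * Ψ i (g.1 (x i))) (fun _ => 0)
    (by
      intro i s t
      simp only [← mul_sub, abs_mul, abs_of_nonneg hl]
      exact mul_le_mul_of_nonneg_left (hΨ i _ _) (abs_nonneg _)) hb ⟨0, by simp⟩
  rw [← mul_div_assoc, Finset.mul_sum]
  refine div_le_div_of_nonneg_right ?_ (by positivity)
  refine le_of_eq_of_le ?_ (main.trans_eq ?_) <;> refine Finset.sum_congr rfl fun σ _ => ?_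
  · rw [sSup_image']
    congr 1
    ext g
    rw [zero_add, Finset.mul_sum]
    exact Finset.sum_congr rfl fun i _ => by ring
  · symm
    rw [sSup_image', Real.mul_iSup_of_nonneg hl]
    congr 1
    ext g
    rw [zero_add, Finset.mul_sum, Finset.mul_sum]
    exact Finset.sum_congr rfl fun i _ => by ring
end

section
/- Let a, ε ∈ ℝ with a ≥ ε > 0, and let 0 < λ⁻ ≤ λ⁺ ≤ 1. Define Γ : ℝ → ℝ by Γ(z) = log( e^{z+a} / (e^{z+a} + 1 − e^z) ). Then for every z with λ⁻ ≤ e^z ≤ λ⁺, the denominator satisfies e^{z+a} + 1 − e^z ≥ (e^ε − 1)·e^z + 1 > 0, Γ is differentiable at z with Γ'(z) = 1 / (e^{z+a} + 1 − e^z), and 0 < Γ'(z) ≤ 1 / ((e^ε − 1)·λ⁻ + 1). In particular, Γ is Lipschitz on the interval [log λ⁻, log λ⁺] with Lipschitz constant max{ 1/((e^ε − 1)λ⁻ + 1), 1/((e^ε − 1)λ⁺ + 1) }. -/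
open Real

/-- properties of the source-side transformation
`Γ(z) = log( e^{z+a} / (e^{z+a} + 1 − e^z) )` for `a ≥ ε > 0` and `0 < λ⁻ ≤ λ⁺ ≤ 1`:
positivity of the denominator, the derivative formula, the derivative bounds, and the
resulting Lipschitz bound on `[log λ⁻, log λ⁺]`. -/
theorem stmt8 (a ε lamm lamp : ℝ) (hε : 0 < ε) (haε : ε ≤ a)
    (hlamm : 0 < lamm) (hlam : lamm ≤ lamp) (hlamp : lamp ≤ 1) :
    (∀ z : ℝ, lamm ≤ Real.exp z → Real.exp z ≤ lamp →
      ((Real.exp ε - 1) * Real.exp z + 1 ≤ Real.exp (z + a) + 1 - Real.exp z ∧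
       0 < (Real.exp ε - 1) * Real.exp z + 1 ∧
       HasDerivAt (fun w => Real.log (Real.exp (w + a) / (Real.exp (w + a) + 1 - Real.exp w)))
         (1 / (Real.exp (z + a) + 1 - Real.exp z)) z ∧
       0 < 1 / (Real.exp (z + a) + 1 - Real.exp z) ∧
       1 / (Real.exp (z + a) + 1 - Real.exp z) ≤ 1 / ((Real.exp ε - 1) * lamm + 1))) ∧
    (∀ z₁ ∈ Set.Icc (Real.log lamm) (Real.log lamp),
     ∀ z₂ ∈ Set.Icc (Real.log lamm) (Real.log lamp),
      |Real.log (Real.exp (z₁ + a) / (Real.exp (z₁ + a) + 1 - Real.exp z₁)) -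
        Real.log (Real.exp (z₂ + a) / (Real.exp (z₂ + a) + 1 - Real.exp z₂))| ≤
      max (1 / ((Real.exp ε - 1) * lamm + 1)) (1 / ((Real.exp ε - 1) * lamp + 1))
        * |z₁ - z₂|) := by
  have key : ∀ z : ℝ, lamm ≤ Real.exp z → Real.exp z ≤ lamp →
      ((Real.exp ε - 1) * Real.exp z + 1 ≤ Real.exp (z + a) + 1 - Real.exp z ∧
       0 < (Real.exp ε - 1) * Real.exp z + 1 ∧
       HasDerivAt (fun w => Real.log (Real.exp (w + a) / (Real.exp (w + a) + 1 - Real.exp w)))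
         (1 / (Real.exp (z + a) + 1 - Real.exp z)) z ∧
       0 < 1 / (Real.exp (z + a) + 1 - Real.exp z) ∧
       1 / (Real.exp (z + a) + 1 - Real.exp z) ≤ 1 / ((Real.exp ε - 1) * lamm + 1)) := by
    intro z h1 _
    have he : 0 < Real.exp ε - 1 := by
      have := Real.one_lt_exp_iff.2 hε
      linarith
    have hz := Real.exp_pos z
    have hea : Real.exp ε ≤ Real.exp a := Real.exp_le_exp.2 haε
    have hA : (Real.exp ε - 1) * Real.exp z + 1 ≤ Real.exp (z + a) + 1 - Real.exp z := by
      rw [Real.exp_add]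
      nlinarith [mul_le_mul_of_nonneg_left hea hz.le]
    have hB : 0 < (Real.exp ε - 1) * Real.exp z + 1 := by positivity
    have hD : 0 < Real.exp (z + a) + 1 - Real.exp z := lt_of_lt_of_le hB hA
    have hN := Real.exp_pos (z + a)
    refine ⟨hA, hB, ?_, by positivity, ?_⟩
    · have d1 : HasDerivAt (fun w : ℝ => Real.exp (w + a)) (Real.exp (z + a)) z := by
        simpa using ((hasDerivAt_id z).add_const a).exp
      have d2 := (d1.add_const 1).sub (Real.hasDerivAt_exp z)
      have d3 := (d1.div d2 hD.ne').log (div_pos hN hD).ne'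
      refine d3.congr_deriv ?_
      simp only [Pi.div_apply, Pi.sub_apply]
      have hD' := hD.ne'
      have hN' := hN.ne'
      generalize Real.exp (z + a) = N at *
      generalize Real.exp z = E at *
      field_simp
      ring
    · apply one_div_le_one_div_of_le (by positivity)
      have := mul_le_mul_of_nonneg_left h1 he.le
      linarith
  refine ⟨key, ?_⟩
  have hp : 0 < lamp := lt_of_lt_of_le hlamm hlam
  intro z₁ hz₁ z₂ hz₂
  have key' : ∀ z ∈ Set.Icc (Real.log lamm) (Real.log lamp), _ := fun z hz =>
    key z ((Real.log_le_iff_le_exp hlamm).1 hz.1) ((Real.le_log_iff_exp_le hp).1 hz.2)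
  have := (convex_Icc (Real.log lamm) (Real.log lamp)).norm_image_sub_le_of_norm_hasDerivWithin_le
    (C := max (1 / ((Real.exp ε - 1) * lamm + 1)) (1 / ((Real.exp ε - 1) * lamp + 1)))
    (fun z hz => (key' z hz).2.2.1.hasDerivWithinAt)
    (fun z hz => by
      rw [Real.norm_of_nonneg (key' z hz).2.2.2.1.le]
      exact (key' z hz).2.2.2.2.trans (le_max_left _ _)) hz₂ hz₁
  simpa only [Real.norm_eq_abs] using this
end

section
/- Let a, ε ∈ ℝ with a ≤ ε, and let 0 < λ⁻ ≤ λ⁺ ≤ 1. Define Ψ : ℝ → ℝ by Ψ(z) = −log( 1 + e^a (e^{−z} − 1) ) = z − log( e^z + e^a − e^{a+z} ). Then for every z with λ⁻ ≤ e^z ≤ λ⁺, one has e^a(1 − e^z) + e^z > 0, Ψ is differentiable at z with Ψ'(z) = e^a / ( e^a (1 − e^z) + e^z ), and 0 < Ψ'(z) ≤ max{ e^ε / ((1 − λ⁻) e^ε + λ⁻), e^ε / ((1 − λ⁺) e^ε + λ⁺) }. In particular, Ψ is Lipschitz on [log λ⁻, log λ⁺] with that constant. -/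
open Real

/-- properties of the target-side transformation
`Ψ(z) = −log(1 + e^a (e^{−z} − 1))` for `a ≤ ε` and `0 < λ⁻ ≤ λ⁺ ≤ 1`:
positivity of the denominator, the derivative formula, the derivative bounds, and the
resulting Lipschitz bound on `[log λ⁻, log λ⁺]`. -/
theorem stmt9 (a ε lamm lamp : ℝ) (haε : a ≤ ε)
    (hlamm : 0 < lamm) (hlam : lamm ≤ lamp) (hlamp : lamp ≤ 1) :
    (∀ z : ℝ, lamm ≤ Real.exp z → Real.exp z ≤ lamp →
      (0 < Real.exp a * (1 - Real.exp z) + Real.exp z ∧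
       HasDerivAt (fun w => -Real.log (1 + Real.exp a * (Real.exp (-w) - 1)))
         (Real.exp a / (Real.exp a * (1 - Real.exp z) + Real.exp z)) z ∧
       0 < Real.exp a / (Real.exp a * (1 - Real.exp z) + Real.exp z) ∧
       Real.exp a / (Real.exp a * (1 - Real.exp z) + Real.exp z) ≤
         max (Real.exp ε / ((1 - lamm) * Real.exp ε + lamm))
             (Real.exp ε / ((1 - lamp) * Real.exp ε + lamp)))) ∧
    (∀ z₁ ∈ Set.Icc (Real.log lamm) (Real.log lamp),
     ∀ z₂ ∈ Set.Icc (Real.log lamm) (Real.log lamp),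
      |(-Real.log (1 + Real.exp a * (Real.exp (-z₁) - 1))) -
        (-Real.log (1 + Real.exp a * (Real.exp (-z₂) - 1)))| ≤
      max (Real.exp ε / ((1 - lamm) * Real.exp ε + lamm))
          (Real.exp ε / ((1 - lamp) * Real.exp ε + lamp)) * |z₁ - z₂|) := by
  have key : ∀ z : ℝ, lamm ≤ Real.exp z → Real.exp z ≤ lamp →
      (0 < Real.exp a * (1 - Real.exp z) + Real.exp z ∧
       HasDerivAt (fun w => -Real.log (1 + Real.exp a * (Real.exp (-w) - 1)))
         (Real.exp a / (Real.exp a * (1 - Real.exp z) + Real.exp z)) z ∧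
       0 < Real.exp a / (Real.exp a * (1 - Real.exp z) + Real.exp z) ∧
       Real.exp a / (Real.exp a * (1 - Real.exp z) + Real.exp z) ≤
         max (Real.exp ε / ((1 - lamm) * Real.exp ε + lamm))
             (Real.exp ε / ((1 - lamp) * Real.exp ε + lamp))) := by
    intro z h1 h2
    have hx : 0 < Real.exp z := Real.exp_pos z
    have hA : 0 < Real.exp a := Real.exp_pos a
    have hE : 0 < Real.exp ε := Real.exp_pos ε
    have hAE : Real.exp a ≤ Real.exp ε := Real.exp_le_exp.mpr haε
    have hD : 0 < Real.exp a * (1 - Real.exp z) + Real.exp z := by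
      have : 0 ≤ Real.exp a * (1 - Real.exp z) := mul_nonneg hA.le (by linarith)
      linarith
    refine ⟨hD, ?_, div_pos hA hD, ?_⟩
    · have hN : 1 + Real.exp a * (Real.exp (-z) - 1)
          = (Real.exp a * (1 - Real.exp z) + Real.exp z) / Real.exp z := by
        rw [Real.exp_neg]; field_simp; ring
      have hNp : 1 + Real.exp a * (Real.exp (-z) - 1) ≠ 0 := by
        rw [hN]; exact (div_pos hD hx).ne'
      have hd : HasDerivAt (fun w : ℝ => 1 + Real.exp a * (Real.exp (-w) - 1))
          (Real.exp a * (Real.exp (-z) * (-1))) z :=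
        ((((hasDerivAt_id z).neg.exp).sub_const 1).const_mul (Real.exp a)).const_add 1
      refine HasDerivAt.congr_deriv (hd.log hNp).neg ?_
      rw [hN, Real.exp_neg]
      have := hD.ne'
      field_simp
    · have hDE : 0 < (1 - Real.exp z) * Real.exp ε + Real.exp z := by
        have : 0 ≤ (1 - Real.exp z) * Real.exp ε := mul_nonneg (by linarith) hE.le
        linarith
      have hDp : 0 < (1 - lamp) * Real.exp ε + lamp := by
        have : 0 ≤ (1 - lamp) * Real.exp ε := mul_nonneg (by linarith) hE.le
        linarith
      have hDm : 0 < (1 - lamm) * Real.exp ε + lamm := by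
        have : 0 ≤ (1 - lamm) * Real.exp ε := mul_nonneg (by linarith) hE.le
        linarith
      have s1 : Real.exp a / (Real.exp a * (1 - Real.exp z) + Real.exp z) ≤
          Real.exp ε / ((1 - Real.exp z) * Real.exp ε + Real.exp z) := by
        rw [div_le_div_iff₀ hD hDE]
        nlinarith [mul_le_mul_of_nonneg_right hAE hx.le]
      refine s1.trans ?_
      rcases le_total 1 (Real.exp ε) with h | h
      · refine le_max_of_le_right (div_le_div_of_nonneg_left hE.le hDp ?_)
        nlinarith [mul_nonneg (sub_nonneg.2 h) (sub_nonneg.2 h2)]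
      · refine le_max_of_le_left (div_le_div_of_nonneg_left hE.le hDm ?_)
        nlinarith [mul_nonneg (sub_nonneg.2 h) (sub_nonneg.2 h1)]
  refine ⟨key, ?_⟩
  intro z₁ hz₁ z₂ hz₂
  have hp : 0 < lamp := lt_of_lt_of_le hlamm hlam
  have key' : ∀ z ∈ Set.Icc (Real.log lamm) (Real.log lamp), _ := fun z hz =>
    key z ((Real.log_le_iff_le_exp hlamm).1 hz.1) ((Real.le_log_iff_exp_le hp).1 hz.2)
  have := (convex_Icc (Real.log lamm) (Real.log lamp)).norm_image_sub_le_of_norm_hasDerivWithin_le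
    (fun z hz => (key' z hz).2.1.hasDerivWithinAt)
    (fun z hz => by
      rw [Real.norm_eq_abs, abs_of_pos (key' z hz).2.2.1]
      exact (key' z hz).2.2.2) hz₂ hz₁
  simpa only [Real.norm_eq_abs] using this
end
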